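/- arXiv:2106.07050 — 2 statements merged into one kernel-verified Lean document; each statement's English description precedes it below -/
import Mathlib

section
/- For every d ≥ 1 and λ > 0 there exists a constant C > 0, depending only on φ and λ, such that for all R > 0 and all (t,x) ∈ Q_R the estimate |∂_t² φ_R(t,x)| ≤ C R^{−4} (φ_R^*(t,x))^{λ/(λ+2)} holds. -/
open MeasureTheory Real Set

noncomputable section

/-- The Laplacian of a function on `ℝ^d`, as the sum of second partial derivatives. -/
def lap {d : ℕ} (f : EuclideanSpace ℝ (Fin d) → ℝ) (x : EuclideanSpace ℝ (Fin d)) : ℝ :=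
  ∑ i : Fin d, iteratedFDeriv ℝ 2 f x ![EuclideanSpace.single i 1, EuclideanSpace.single i 1]

/-- The harmonic weight function `Ψ`. -/
def Psi (d : ℕ) (α β : ℝ) (x : EuclideanSpace ℝ (Fin d)) : ℝ :=
  if β = 0 then 1
  else if d = 2 then Real.log ‖x‖ + α / β
  else 1 - ‖x‖ ^ ((2 : ℝ) - d) + (α / β) * ((d : ℝ) - 2)

/-- `φ*`: the modification of the cutoff `φ` vanishing on `[0, 1/2)`. -/
def phiStar (φ : ℝ → ℝ) (ρ : ℝ) : ℝ := if ρ < 1 / 2 then 0 else φ ρ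

/-- The standing assumptions on the cutoff function `φ`: smooth, `0 ≤ φ ≤ 1`, `φ ≡ 1` on
`[0,1/2]`, decreasing on `(1/2, 1)` and `φ ≡ 0` on `[1, ∞)`. -/
def CutoffHyp (φ : ℝ → ℝ) : Prop :=
  ContDiff ℝ (⊤ : ℕ∞) φ ∧ (∀ ρ, 0 ≤ φ ρ ∧ φ ρ ≤ 1) ∧ (∀ ρ ∈ Icc (0 : ℝ) (1 / 2), φ ρ = 1) ∧
  AntitoneOn φ (Ioo (1 / 2 : ℝ) 1) ∧ ∀ ρ, (1 : ℝ) ≤ ρ → φ ρ = 0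

/-- `φ_R(t,x) = (φ((t² + (|x|-1)⁴)/R⁴))^{λ+2}`. -/
def phiR {d : ℕ} (φ : ℝ → ℝ) (lam R t : ℝ) (x : EuclideanSpace ℝ (Fin d)) : ℝ :=
  φ ((t ^ 2 + (‖x‖ - 1) ^ 4) / R ^ 4) ^ (lam + 2)

/-- `φ_R^*(t,x) = (φ*((t² + (|x|-1)⁴)/R⁴))^{λ+2}`. -/
def phiRStar {d : ℕ} (φ : ℝ → ℝ) (lam R t : ℝ) (x : EuclideanSpace ℝ (Fin d)) : ℝ :=
  phiStar φ ((t ^ 2 + (‖x‖ - 1) ^ 4) / R ^ 4) ^ (lam + 2)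

/-!
For fixed `x`, `φ_R(t, x) = F((t² + a) / R⁴)` with `F = φ ^ (λ + 2)` and `a = (|x| - 1)⁴`, so
`∂ₜ²φ_R = (2t / R⁴)² F'' + (2 / R⁴) F'`. Both `F'` and `F''` are continuous functions times `φ ^ λ`,
and they vanish where `φ` is constant, so `|F'|, |F''| ≤ K (φ*) ^ λ`. Where they do not vanish,
`t² ≤ R⁴`, hence `(2t / R⁴)² ≤ 4 / R⁴`.
-/

section IteratedDeriv

lemma iteratedDeriv_eq_zero_of_eqOn_const {𝕜 F : Type*} [NontriviallyNormedField 𝕜]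
    [NormedAddCommGroup F] [NormedSpace 𝕜 F] {f : 𝕜 → F} {s : Set 𝕜} {x : 𝕜} {c : F} {n : ℕ}
    (hn : n ≠ 0) (hs : UniqueDiffOn 𝕜 s) (hf : ContDiffAt 𝕜 n f x)
    (hfc : EqOn f (fun _ ↦ c) s) (hx : x ∈ s) : iteratedDeriv n f x = 0 := by
  rw [← iteratedDerivWithin_eq_iteratedDeriv hs hf hx, iteratedDerivWithin_congr hfc hx,
    iteratedDerivWithin_const, if_neg hn]

lemma deriv_eq_zero_of_eqOn_const {𝕜 F : Type*} [NontriviallyNormedField 𝕜]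
    [NormedAddCommGroup F] [NormedSpace 𝕜 F] {f : 𝕜 → F} {s : Set 𝕜} {x : 𝕜} {c : F}
    (hs : UniqueDiffWithinAt 𝕜 s x) (hf : DifferentiableAt 𝕜 f x)
    (hfc : EqOn f (fun _ ↦ c) s) (hx : x ∈ s) : deriv f x = 0 := by
  rw [← hf.derivWithin hs, derivWithin_congr hfc (hfc hx), derivWithin_fun_const, Pi.zero_apply]

end IteratedDeriv

section Rpow

variable {f : ℝ → ℝ} {p x : ℝ}

lemma rpow_sub_one_eq_rpow_sub_two_mul (hx : 0 ≤ x) (hp : p ≠ 1) :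
    x ^ (p - 1) = x ^ (p - 2) * x := by
  have hexp : p - 1 = p - 2 + 1 := by ring
  rw [hexp, Real.rpow_add_one' hx (hexp ▸ sub_ne_zero.mpr hp)]

lemma iteratedDeriv_two_rpow_const (p x : ℝ) :
    iteratedDeriv 2 (fun y : ℝ ↦ y ^ p) x = p * (p - 1) * x ^ (p - 2) := by
  simp only [iteratedDeriv_succ, iteratedDeriv_zero, Real.deriv_rpow_const', deriv_const_mul_field']
  ring_nf

lemma deriv_rpow_eq_mul_rpow_sub_two (hf : DifferentiableAt ℝ f x) (hfx : 0 ≤ f x) (hp : 1 < p) :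
    deriv (fun y ↦ f y ^ p) x = p * deriv f x * f x * f x ^ (p - 2) := by
  rw [deriv_rpow_const hf (.inr hp.le), rpow_sub_one_eq_rpow_sub_two_mul hfx hp.ne']
  ring

lemma iteratedDeriv_two_rpow_eq_mul_rpow_sub_two (hf : ContDiffAt ℝ 2 f x) (hfx : 0 ≤ f x)
    (hp : 2 ≤ p) :
    iteratedDeriv 2 (fun y ↦ f y ^ p) x =
      p * ((p - 1) * deriv f x ^ 2 + iteratedDeriv 2 f x * f x) * f x ^ (p - 2) := by
  have hrpow : ContDiff ℝ 2 (fun y : ℝ ↦ y ^ p) :=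
    contDiff_id.rpow_const_of_le (by exact_mod_cast hp)
  have hchain := iteratedDeriv_comp_two hrpow.contDiffAt hf
  rw [iteratedDeriv_two_rpow_const, Real.deriv_rpow_const,
    rpow_sub_one_eq_rpow_sub_two_mul hfx (by linarith)] at hchain
  exact hchain.trans (by ring)

lemma exists_abs_deriv_rpow_le {s : Set ℝ} (hs : IsCompact s) (hf : ContDiff ℝ 2 f)
    (hfs : ∀ x ∈ s, 0 ≤ f x) (hp : 2 ≤ p) :
    ∃ K > 0, ∀ x ∈ s, |deriv (fun y ↦ f y ^ p) x| ≤ K * f x ^ (p - 2) ∧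
      |iteratedDeriv 2 (fun y ↦ f y ^ p) x| ≤ K * f x ^ (p - 2) := by
  have hf' : Continuous (deriv f) := hf.continuous_deriv one_le_two
  have hcont : Continuous fun x ↦ (p * deriv f x * f x,
      p * ((p - 1) * deriv f x ^ 2 + iteratedDeriv 2 f x * f x)) := by
    have := hf.continuous
    fun_prop
  obtain ⟨K, hK⟩ := hs.exists_bound_of_continuousOn hcont.continuousOn
  refine ⟨max K 1, by positivity, fun x hx ↦ ?_⟩
  have hpow : 0 ≤ f x ^ (p - 2) := Real.rpow_nonneg (hfs x hx) _
  have hfactors := norm_prod_le_iff.mp ((hK x hx).trans (le_max_left K 1))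
  rw [deriv_rpow_eq_mul_rpow_sub_two (hf.differentiable two_ne_zero x) (hfs x hx) (by linarith),
    iteratedDeriv_two_rpow_eq_mul_rpow_sub_two hf.contDiffAt (hfs x hx) hp,
    abs_mul _ (f x ^ (p - 2)), abs_mul _ (f x ^ (p - 2)), abs_of_nonneg hpow]
  exact ⟨mul_le_mul_of_nonneg_right hfactors.1 hpow, mul_le_mul_of_nonneg_right hfactors.2 hpow⟩

end Rpow

section ParabolicScaling

variable {F : ℝ → ℝ}

lemma iteratedDeriv_two_comp_sq_add_div (hF : ContDiff ℝ 2 F) (a c t : ℝ) :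
    iteratedDeriv 2 (fun s ↦ F ((s ^ 2 + a) / c)) t =
      iteratedDeriv 2 F ((t ^ 2 + a) / c) * (2 * t / c) ^ 2 +
        deriv F ((t ^ 2 + a) / c) * (2 / c) := by
  let g : ℝ → ℝ := fun s ↦ (s ^ 2 + a) / c
  have hg : ContDiff ℝ 2 g := by fun_prop
  have hg' : deriv g = fun s ↦ 2 * s / c := by
    ext s
    simp [g]
  have hg'' : iteratedDeriv 2 g t = 2 / c := by
    simp [iteratedDeriv_succ, hg']
  rw [← hg'', ← congrFun hg' t]
  exact iteratedDeriv_comp_two hF.contDiffAt hg.contDiffAt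

lemma abs_iteratedDeriv_two_comp_sq_add_div_le (hF : ContDiff ℝ 2 F)
    (hF_zero : EqOn F (fun _ ↦ 0) (Ici 1)) {a c B t : ℝ} (ha : 0 ≤ a) (hc : 0 < c)
    (hF' : |deriv F ((t ^ 2 + a) / c)| ≤ B) (hF'' : |iteratedDeriv 2 F ((t ^ 2 + a) / c)| ≤ B) :
    |iteratedDeriv 2 (fun s ↦ F ((s ^ 2 + a) / c)) t| ≤ 6 * B / c := by
  have hB : 0 ≤ B := (abs_nonneg _).trans hF'
  rw [iteratedDeriv_two_comp_sq_add_div hF]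
  rcases le_total 1 ((t ^ 2 + a) / c) with houtside | hinside
  · rw [deriv_eq_zero_of_eqOn_const (uniqueDiffOn_Ici 1 _ houtside)
        (hF.differentiable two_ne_zero _) hF_zero houtside,
      iteratedDeriv_eq_zero_of_eqOn_const two_ne_zero (uniqueDiffOn_Ici 1) hF.contDiffAt
        hF_zero houtside, zero_mul, zero_mul, add_zero, abs_zero]
    positivity
  · have hspeed : (2 * t / c) ^ 2 ≤ 4 / c := by
      have ht : t ^ 2 ≤ c := by linarith [(div_le_one hc).mp hinside]
      calc (2 * t / c) ^ 2 = 4 * t ^ 2 / c ^ 2 := by ring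
        _ ≤ 4 * c / c ^ 2 := by gcongr
        _ = 4 / c := by field_simp
    calc |iteratedDeriv 2 F ((t ^ 2 + a) / c) * (2 * t / c) ^ 2 +
            deriv F ((t ^ 2 + a) / c) * (2 / c)|
        ≤ |iteratedDeriv 2 F ((t ^ 2 + a) / c)| * (2 * t / c) ^ 2 +
            |deriv F ((t ^ 2 + a) / c)| * (2 / c) := by
          refine (abs_add_le _ _).trans_eq ?_
          rw [abs_mul, abs_mul, abs_of_nonneg (sq_nonneg (2 * t / c)),
            abs_of_pos (div_pos two_pos hc)]
      _ ≤ B * (4 / c) + B * (2 / c) := by gcongr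
      _ = 6 * B / c := by ring

end ParabolicScaling

section Cutoff

variable {φ : ℝ → ℝ} {lam m ρ : ℝ}

lemma phiStar_nonneg (hφ : 0 ≤ φ ρ) : 0 ≤ phiStar φ ρ := by
  unfold phiStar
  split_ifs
  · exact le_rfl
  · exact hφ

lemma phiStar_of_le (hρ : 1 / 2 ≤ ρ) : phiStar φ ρ = φ ρ :=
  if_neg hρ.not_gt

lemma phiRStar_rpow {d : ℕ} {R t : ℝ} {x : EuclideanSpace ℝ (Fin d)}
    (hφ : 0 ≤ φ ((t ^ 2 + (‖x‖ - 1) ^ 4) / R ^ 4)) (hlam : lam + 2 ≠ 0) :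
    phiRStar φ lam R t x ^ (lam / (lam + 2)) =
      phiStar φ ((t ^ 2 + (‖x‖ - 1) ^ 4) / R ^ 4) ^ lam := by
  rw [phiRStar, ← Real.rpow_mul (phiStar_nonneg hφ), mul_div_cancel₀ _ hlam]

lemma exists_abs_deriv_rpow_le_phiStar (hlam : 0 ≤ lam) (hφ : ContDiff ℝ 2 φ)
    (hφ_nonneg : ∀ ρ, 0 ≤ ρ → 0 ≤ φ ρ) (hφ_const : EqOn φ (fun _ ↦ m) (Icc 0 (1 / 2)))
    (hφ_zero : EqOn φ (fun _ ↦ 0) (Ici 1)) :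
    ∃ K > 0, ∀ ρ, 0 ≤ ρ →
      |deriv (fun r ↦ φ r ^ (lam + 2)) ρ| ≤ K * phiStar φ ρ ^ lam ∧
      |iteratedDeriv 2 (fun r ↦ φ r ^ (lam + 2)) ρ| ≤ K * phiStar φ ρ ^ lam := by
  set F : ℝ → ℝ := fun r ↦ φ r ^ (lam + 2)
  have hF : ContDiff ℝ 2 F := hφ.rpow_const_of_le (by push_cast; linarith)
  obtain ⟨K, hK, hbound⟩ := exists_abs_deriv_rpow_le (s := Icc (1 / 2) 1) (p := lam + 2)
    isCompact_Icc hφ (fun ρ hρ ↦ hφ_nonneg ρ (by linarith [hρ.1])) (by linarith)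
  refine ⟨K, hK, fun ρ hρ ↦ ?_⟩
  have hbound_of_const {s : Set ℝ} {c : ℝ} (hs : UniqueDiffOn ℝ s)
      (hφc : EqOn φ (fun _ ↦ c) s) (hρs : ρ ∈ s) :
      |deriv F ρ| ≤ K * phiStar φ ρ ^ lam ∧ |iteratedDeriv 2 F ρ| ≤ K * phiStar φ ρ ^ lam := by
    have hFc : EqOn F (fun _ ↦ c ^ (lam + 2)) s := hφc.comp_left (g := (· ^ (lam + 2)))
    have hstar : 0 ≤ phiStar φ ρ := phiStar_nonneg (hφ_nonneg ρ hρ)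
    rw [deriv_eq_zero_of_eqOn_const (hs ρ hρs) (hF.differentiable two_ne_zero ρ) hFc hρs,
      iteratedDeriv_eq_zero_of_eqOn_const two_ne_zero hs hF.contDiffAt hFc hρs, abs_zero]
    exact ⟨by positivity, by positivity⟩
  rcases lt_or_ge ρ (1 / 2) with hinner | hinner
  · exact hbound_of_const (uniqueDiffOn_Icc (by norm_num)) hφ_const ⟨hρ, hinner.le⟩
  rcases le_total ρ 1 with houter | houter
  · simpa only [phiStar_of_le hinner, add_sub_cancel_right] using hbound ρ ⟨hinner, houter⟩
  · exact hbound_of_const (uniqueDiffOn_Ici 1) hφ_zero houter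

end Cutoff

theorem phiR_deriv_tt_est_general {lam : ℝ} (hlam : 0 ≤ lam) {φ : ℝ → ℝ} {m : ℝ}
    (hφ : ContDiff ℝ 2 φ) (hφ_nonneg : ∀ ρ, 0 ≤ ρ → 0 ≤ φ ρ)
    (hφ_const : EqOn φ (fun _ ↦ m) (Icc 0 (1 / 2))) (hφ_zero : EqOn φ (fun _ ↦ 0) (Ici 1)) :
    ∃ C > 0, ∀ (d : ℕ) (R : ℝ), R ≠ 0 → ∀ (t : ℝ) (x : EuclideanSpace ℝ (Fin d)),
      |iteratedDeriv 2 (fun s ↦ phiR φ lam R s x) t| ≤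
        C * R ^ (-4 : ℝ) * phiRStar φ lam R t x ^ (lam / (lam + 2)) := by
  obtain ⟨K, hK, hbound⟩ :=
    exists_abs_deriv_rpow_le_phiStar hlam hφ hφ_nonneg hφ_const hφ_zero
  refine ⟨6 * K, by positivity, fun d R hR t x ↦ ?_⟩
  set ρ := (t ^ 2 + (‖x‖ - 1) ^ 4) / R ^ 4
  have hρ : 0 ≤ ρ := by positivity
  have hF : ContDiff ℝ 2 fun r ↦ φ r ^ (lam + 2) :=
    hφ.rpow_const_of_le (by push_cast; linarith)
  have hF_zero : EqOn (fun r ↦ φ r ^ (lam + 2)) (fun _ ↦ 0) (Ici 1) := fun r hr ↦ by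
    simp only [hφ_zero hr, Real.zero_rpow (by linarith : lam + 2 ≠ 0)]
  have hR4 : R ^ (-4 : ℝ) = (R ^ 4)⁻¹ := by
    exact_mod_cast Real.rpow_intCast R (-4)
  calc |iteratedDeriv 2 (fun s ↦ phiR φ lam R s x) t|
      ≤ 6 * (K * phiStar φ ρ ^ lam) / R ^ 4 :=
        abs_iteratedDeriv_two_comp_sq_add_div_le hF hF_zero (by positivity) (by positivity)
          (hbound ρ hρ).1 (hbound ρ hρ).2
    _ = 6 * K * R ^ (-4 : ℝ) * phiRStar φ lam R t x ^ (lam / (lam + 2)) := by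
        rw [phiRStar_rpow (hφ_nonneg ρ hρ) (by linarith), hR4]
        ring

theorem phiR_deriv_tt_est (d : ℕ) (hd : 1 ≤ d) (lam : ℝ) (hlam : 0 < lam)
    (φ : ℝ → ℝ) (hφ : CutoffHyp φ) :
    ∃ C > (0 : ℝ), ∀ R > (0 : ℝ), ∀ (t : ℝ) (x : EuclideanSpace ℝ (Fin d)),
      0 < t → 1 < ‖x‖ → t ^ 2 + (‖x‖ - 1) ^ 4 < R ^ 4 →
      |deriv (fun s => deriv (fun r => phiR φ lam R r x) s) t|
        ≤ C * R ^ (-4 : ℝ) * phiRStar φ lam R t x ^ (lam / (lam + 2)) := by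
  obtain ⟨hφ_smooth, hφ_mem, hφ_one, -, hφ_zero⟩ := hφ
  obtain ⟨C, hC, hbound⟩ := phiR_deriv_tt_est_general hlam.le (contDiff_infty.mp hφ_smooth 2)
    (fun ρ _ ↦ (hφ_mem ρ).1) hφ_one hφ_zero
  refine ⟨C, hC, fun R hR t x _ _ _ ↦ ?_⟩
  simpa only [iteratedDeriv_succ, iteratedDeriv_zero] using hbound d R hR.ne' t x
end
end

section
/- For every d ≥ 1 and λ > 0 there exists a constant C > 0, depending only on φ, λ and d, such that for all R > 0 and all (t,x) ∈ Q_R the estimate |Δ_x φ_R(t,x)| ≤ C R^{−2} (φ_R^*(t,x))^{λ/(λ+2)} holds, where Δ_x denotes the Laplacian in the space variable x. -/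
open MeasureTheory Real Set

noncomputable section

/-!
The Laplacian of a radial function `g ‖x‖` is `g'' + (d - 1) g' / ‖x‖`. With `g = F ∘ ρ`, where
`F = φ ^ (λ + 2)` and `ρ s = (t² + (s - 1)⁴) / R⁴`, this is
`F''(ρ) ρ'² + F'(ρ) (ρ'' + (d - 1) ρ' / ‖x‖)`. In `Q_R` one has `|‖x‖ - 1| ≤ R`, which makes
`ρ'²`, `ρ''` and, since `‖x‖ ≥ |‖x‖ - 1|`, also `ρ' / ‖x‖` of size `R⁻²`. Both `F'` and `F''` are
`φ ^ λ` times a continuous function, and they vanish where `φ` is locally constant, so they are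
controlled by `φ* ^ λ`.
-/

section Radial

open Topology

variable {E : Type*} [NormedAddCommGroup E] [InnerProductSpace ℝ E] {g : ℝ → ℝ} {x : E}

lemma hasFDerivAt_norm_of_ne_zero (hx : x ≠ 0) :
    HasFDerivAt (fun y : E => ‖y‖) (‖x‖⁻¹ • innerSL ℝ x) x := by
  have hsqrt := (hasStrictFDerivAt_norm_sq x).hasFDerivAt.sqrt (by positivity)
  simp only [Real.sqrt_sq (norm_nonneg _)] at hsqrt
  refine hsqrt.congr_fderiv ?_
  ext v
  simp only [smul_apply, innerSL_apply_apply, nsmul_eq_mul, Nat.cast_ofNat, smul_eq_mul]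
  field_simp

lemma hasFDerivAt_comp_norm (hx : x ≠ 0) (hg : DifferentiableAt ℝ g ‖x‖) :
    HasFDerivAt (fun y : E => g ‖y‖) ((deriv g ‖x‖ / ‖x‖) • innerSL ℝ x) x := by
  have h := hg.hasDerivAt.comp_hasFDerivAt x (hasFDerivAt_norm_of_ne_zero hx)
  rwa [smul_smul, ← div_eq_mul_inv] at h

lemma fderiv_comp_norm_eventuallyEq (hx : x ≠ 0) (hg : ContDiffAt ℝ 2 g ‖x‖) :
    fderiv ℝ (fun y : E => g ‖y‖) =ᶠ[𝓝 x] fun y => (deriv g ‖y‖ / ‖y‖) • innerSL ℝ y := by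
  have hdiff : ∀ᶠ y : E in 𝓝 x, ContDiffAt ℝ 2 g ‖y‖ :=
    continuous_norm.continuousAt.eventually (hg.eventually (by simp))
  filter_upwards [hdiff, isOpen_ne.mem_nhds hx] with y hgy hy
  exact (hasFDerivAt_comp_norm hy (hgy.differentiableAt two_ne_zero)).fderiv

lemma hasDerivAt_deriv_div_self {r : ℝ} (hr : r ≠ 0) (hg : ContDiffAt ℝ 2 g r) :
    HasDerivAt (fun s => deriv g s / s) ((iteratedDeriv 2 g r - deriv g r / r) / r) r := by
  have hg' : HasDerivAt (deriv g) (iteratedDeriv 2 g r) r := by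
    rw [iteratedDeriv_succ, iteratedDeriv_one]
    exact ((hg.derivWithin (m := 1) (by norm_num)).differentiableAt one_ne_zero).hasDerivAt
  refine (hg'.div (hasDerivAt_id r) hr).congr_deriv ?_
  simp only [id]
  field_simp

lemma iteratedFDeriv_two_comp_norm (hx : x ≠ 0) (hg : ContDiffAt ℝ 2 g ‖x‖) (v w : E) :
    iteratedFDeriv ℝ 2 (fun y : E => g ‖y‖) x ![v, w] =
      deriv g ‖x‖ / ‖x‖ * inner ℝ v w +
        (iteratedDeriv 2 g ‖x‖ - deriv g ‖x‖ / ‖x‖) / ‖x‖ ^ 2 * (inner ℝ x v * inner ℝ x w) := by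
  have hcoeff : HasFDerivAt (fun y : E => deriv g ‖y‖ / ‖y‖) _ x :=
    (hasDerivAt_deriv_div_self (norm_ne_zero_iff.mpr hx) hg).comp_hasFDerivAt x
      (hasFDerivAt_norm_of_ne_zero hx)
  rw [iteratedFDeriv_two_apply, (fderiv_comp_norm_eventuallyEq hx hg).fderiv_eq,
    (hcoeff.fun_smul (innerSL ℝ).hasFDerivAt).fderiv]
  simp only [Matrix.cons_val_zero, Matrix.cons_val_one, Matrix.cons_val_fin_one,
    add_apply, smul_apply, ContinuousLinearMap.smulRight_apply, smul_eq_mul]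
  rw [innerSL_apply_apply, innerSL_apply_apply, innerSL_apply_apply]
  field_simp

lemma laplacian_comp_norm [FiniteDimensional ℝ E] (hx : x ≠ 0) (hg : ContDiffAt ℝ 2 g ‖x‖) :
    Laplacian.laplacian (fun y : E => g ‖y‖) x =
      iteratedDeriv 2 g ‖x‖ + ((Module.finrank ℝ E : ℝ) - 1) * (deriv g ‖x‖ / ‖x‖) := by
  have hn : ‖x‖ ≠ 0 := norm_ne_zero_iff.mpr hx
  rw [InnerProductSpace.laplacian_eq_iteratedFDeriv_stdOrthonormalBasis]
  simp only [iteratedFDeriv_two_comp_norm hx hg, Finset.sum_add_distrib, ← Finset.mul_sum, ← sq,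
    (stdOrthonormalBasis ℝ E).sum_sq_inner_left, real_inner_self_eq_norm_sq,
    OrthonormalBasis.norm_eq_one, one_pow, Finset.sum_const, Finset.card_univ, Fintype.card_fin,
    nsmul_eq_mul, mul_one]
  field_simp
  ring

end Radial

lemma lap_eq_laplacian {d : ℕ} (f : EuclideanSpace ℝ (Fin d) → ℝ) :
    lap f = Laplacian.laplacian f := by
  rw [InnerProductSpace.laplacian_eq_iteratedFDeriv_orthonormalBasis f
    (EuclideanSpace.basisFun (Fin d) ℝ)]
  funext x
  simp only [lap, EuclideanSpace.basisFun_apply]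

section ParabolicGauge

/-- The argument of the cutoff in `phiR` as a function of the radius `s = |x|`: `Q_R` is the part
of `(0, ∞) × Ω` where it is less than `1`. -/
def parabolicGauge (R t s : ℝ) : ℝ := (t ^ 2 + (s - 1) ^ 4) / R ^ 4

variable {R t s : ℝ}

lemma contDiff_parabolicGauge : ContDiff ℝ 2 (parabolicGauge R t) := by
  unfold parabolicGauge
  fun_prop

lemma deriv_parabolicGauge :
    deriv (parabolicGauge R t) = fun s => 4 * (s - 1) ^ 3 / R ^ 4 := by
  funext s
  have h := ((((hasDerivAt_id s).sub_const 1).pow 4).const_add (t ^ 2)).div_const (R ^ 4)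
  refine h.deriv.trans ?_
  simp only [id]
  ring

lemma iteratedDeriv_two_parabolicGauge :
    iteratedDeriv 2 (parabolicGauge R t) = fun s => 12 * (s - 1) ^ 2 / R ^ 4 := by
  rw [iteratedDeriv_succ, iteratedDeriv_one, deriv_parabolicGauge]
  funext s
  have h := ((((hasDerivAt_id s).sub_const 1).pow 3).const_mul 4).div_const (R ^ 4)
  refine h.deriv.trans ?_
  simp only [id]
  ring

lemma parabolicGauge_pos (hR : 0 < R) (hs : 1 < s) : 0 < parabolicGauge R t s := by
  have : 0 < s - 1 := sub_pos.mpr hs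
  unfold parabolicGauge
  positivity

lemma abs_sub_one_le_of_parabolicGauge_le_one (hR : 0 < R) (h : parabolicGauge R t s ≤ 1) :
    |s - 1| ≤ R := by
  rw [parabolicGauge, div_le_one (by positivity)] at h
  refine le_of_pow_le_pow_left₀ four_ne_zero hR.le ?_
  rw [Even.pow_abs (by decide)]
  linarith [sq_nonneg t]

lemma sq_deriv_parabolicGauge_le (hR : 0 < R) (hs : |s - 1| ≤ R) :
    deriv (parabolicGauge R t) s ^ 2 ≤ 16 / R ^ 2 := by
  calc deriv (parabolicGauge R t) s ^ 2
      = 16 * |s - 1| ^ 6 / R ^ 8 := by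
        rw [deriv_parabolicGauge, Even.pow_abs (by decide)]; ring
    _ ≤ 16 * R ^ 6 / R ^ 8 := by gcongr
    _ = 16 / R ^ 2 := by field_simp

lemma abs_iteratedDeriv_two_parabolicGauge_le (hR : 0 < R) (hs : |s - 1| ≤ R) :
    |iteratedDeriv 2 (parabolicGauge R t) s| ≤ 12 / R ^ 2 := by
  calc |iteratedDeriv 2 (parabolicGauge R t) s|
      = 12 * |s - 1| ^ 2 / R ^ 4 := by
        rw [iteratedDeriv_two_parabolicGauge, abs_of_nonneg (by positivity), sq_abs]
    _ ≤ 12 * R ^ 2 / R ^ 4 := by gcongr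
    _ = 12 / R ^ 2 := by field_simp

lemma abs_deriv_parabolicGauge_div_self_le (hR : 0 < R) (hs1 : 1 ≤ s) (hs : |s - 1| ≤ R) :
    |deriv (parabolicGauge R t) s / s| ≤ 4 / R ^ 2 := by
  have hs0 : 0 < s := one_pos.trans_le hs1
  have hle : |s - 1| ≤ s := by rw [abs_of_nonneg (sub_nonneg.mpr hs1)]; linarith
  calc |deriv (parabolicGauge R t) s / s|
      = 4 * |s - 1| ^ 2 / R ^ 4 * (|s - 1| / s) := by
        simp only [deriv_parabolicGauge, abs_div, abs_mul, abs_pow, abs_of_pos hs0, abs_of_pos hR,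
          Nat.abs_ofNat]
        ring
    _ ≤ 4 * R ^ 2 / R ^ 4 * 1 := by gcongr; exact (div_le_one hs0).mpr hle
    _ = 4 / R ^ 2 := by field_simp

lemma abs_laplacian_comp_parabolicGauge_norm_le {E : Type*} [NormedAddCommGroup E]
    [InnerProductSpace ℝ E] [FiniteDimensional ℝ E] {x : E} {F : ℝ → ℝ} {M : ℝ}
    (hF : ContDiff ℝ 2 F) (hR : 0 < R) (hx1 : 1 ≤ ‖x‖) (hxR : |‖x‖ - 1| ≤ R)
    (hF1 : |deriv F (parabolicGauge R t ‖x‖)| ≤ M)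
    (hF2 : |iteratedDeriv 2 F (parabolicGauge R t ‖x‖)| ≤ M) :
    |Laplacian.laplacian (fun y : E => F (parabolicGauge R t ‖y‖)) x| ≤
      M * ((28 + 4 * |(Module.finrank ℝ E : ℝ) - 1|) / R ^ 2) := by
  have hx : x ≠ 0 := norm_pos_iff.mp (one_pos.trans_le hx1)
  have hρ : ContDiff ℝ 2 (parabolicGauge R t) := contDiff_parabolicGauge
  have hM : 0 ≤ M := (abs_nonneg _).trans hF1
  set n := (Module.finrank ℝ E : ℝ)
  set ρ := parabolicGauge R t
  set r := ‖x‖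
  have hlap : Laplacian.laplacian (fun y : E => F (ρ ‖y‖)) x =
      iteratedDeriv 2 F (ρ r) * deriv ρ r ^ 2 +
        deriv F (ρ r) * (iteratedDeriv 2 ρ r + (n - 1) * (deriv ρ r / r)) := by
    refine (laplacian_comp_norm (g := F ∘ ρ) hx (hF.comp hρ).contDiffAt).trans ?_
    rw [iteratedDeriv_comp_two hF.contDiffAt hρ.contDiffAt,
      deriv_comp _ (hF.differentiable two_ne_zero _) (hρ.differentiable two_ne_zero _)]
    ring
  have hfirst : |iteratedDeriv 2 ρ r + (n - 1) * (deriv ρ r / r)| ≤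
      12 / R ^ 2 + |n - 1| * (4 / R ^ 2) := by
    refine (abs_add_le _ _).trans (add_le_add (abs_iteratedDeriv_two_parabolicGauge_le hR hxR) ?_)
    rw [abs_mul]
    gcongr
    exact abs_deriv_parabolicGauge_div_self_le hR hx1 hxR
  calc |Laplacian.laplacian (fun y : E => F (ρ ‖y‖)) x|
      ≤ |iteratedDeriv 2 F (ρ r)| * deriv ρ r ^ 2 +
          |deriv F (ρ r)| * |iteratedDeriv 2 ρ r + (n - 1) * (deriv ρ r / r)| := by
        rw [hlap]
        refine (abs_add_le _ _).trans_eq ?_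
        rw [abs_mul, abs_mul, abs_sq]
    _ ≤ M * (16 / R ^ 2) + M * (12 / R ^ 2 + |n - 1| * (4 / R ^ 2)) := by
        gcongr
        exact sq_deriv_parabolicGauge_le hR hxR
    _ = M * ((28 + 4 * |n - 1|) / R ^ 2) := by ring

end ParabolicGauge

section CutoffPower

open Topology

variable {φ : ℝ → ℝ} {lam : ℝ}

lemma deriv_rpow_add_two {s : ℝ} (hlam : 0 ≤ lam) (hφ : DifferentiableAt ℝ φ s) (hφ0 : 0 ≤ φ s) :
    deriv (fun s => φ s ^ (lam + 2)) s = φ s ^ lam * ((lam + 2) * φ s * deriv φ s) := by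
  rw [_root_.deriv_rpow_const hφ (Or.inr (by linarith)), show lam + 2 - 1 = lam + 1 by ring,
    Real.rpow_add_one' hφ0 (by positivity)]
  ring

lemma iteratedDeriv_two_rpow_add_two {s : ℝ} (hlam : 0 ≤ lam) (hφ : ContDiffAt ℝ 2 φ s)
    (hφ0 : 0 ≤ φ s) :
    iteratedDeriv 2 (fun s => φ s ^ (lam + 2)) s =
      φ s ^ lam * ((lam + 2) * ((lam + 1) * deriv φ s ^ 2 + φ s * iteratedDeriv 2 φ s)) := by
  have hpow : ContDiffAt ℝ 2 (fun u : ℝ => u ^ (lam + 2)) (φ s) :=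
    contDiffAt_rpow_const_of_le (n := 2) (by simpa using hlam)
  have hpow1 : deriv (fun u : ℝ => u ^ (lam + 2)) (φ s) = (lam + 2) * (φ s ^ lam * φ s) := by
    rw [Real.deriv_rpow_const, show lam + 2 - 1 = lam + 1 by ring,
      Real.rpow_add_one' hφ0 (by positivity)]
  have hpow2 : iteratedDeriv 2 (fun u : ℝ => u ^ (lam + 2)) (φ s) =
      (lam + 2) * ((lam + 1) * φ s ^ lam) := by
    rw [iteratedDeriv_succ, iteratedDeriv_one, deriv_rpow_const', deriv_const_mul_field,
      Real.deriv_rpow_const, show lam + 2 - 1 = lam + 1 by ring, add_sub_cancel_right]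
  rw [← Function.comp_def (fun u : ℝ => u ^ (lam + 2)) φ, iteratedDeriv_comp_two hpow hφ,
    hpow1, hpow2]
  ring

lemma exists_abs_deriv_rpow_add_two_le (hlam : 0 ≤ lam) (hφ : ContDiff ℝ 2 φ)
    (hφ0 : ∀ s, 0 ≤ φ s) {S : Set ℝ} (hS : IsCompact S) :
    ∃ K > 0, ∀ s ∈ S, |deriv (fun s => φ s ^ (lam + 2)) s| ≤ K * φ s ^ lam ∧
      |iteratedDeriv 2 (fun s => φ s ^ (lam + 2)) s| ≤ K * φ s ^ lam := by
  have hcont0 : Continuous φ := hφ.continuous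
  have hcont1 : Continuous (deriv φ) := hφ.continuous_deriv one_le_two
  obtain ⟨A, hA⟩ := hS.exists_bound_of_continuousOn
    (f := fun s => (lam + 2) * φ s * deriv φ s) (by fun_prop)
  obtain ⟨B, hB⟩ := hS.exists_bound_of_continuousOn
    (f := fun s => (lam + 2) * ((lam + 1) * deriv φ s ^ 2 + φ s * iteratedDeriv 2 φ s))
    (by fun_prop)
  refine ⟨max 1 (max A B), by positivity, fun s hs => ?_⟩
  have hpow : 0 ≤ φ s ^ lam := Real.rpow_nonneg (hφ0 s) lam
  rw [deriv_rpow_add_two hlam (hφ.differentiable two_ne_zero s) (hφ0 s),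
    iteratedDeriv_two_rpow_add_two hlam hφ.contDiffAt (hφ0 s), abs_mul (φ s ^ lam),
    abs_mul (φ s ^ lam), abs_of_nonneg hpow, mul_comm (max _ _)]
  exact ⟨mul_le_mul_of_nonneg_left ((hA s hs).trans (le_max_of_le_right (le_max_left _ _))) hpow,
    mul_le_mul_of_nonneg_left ((hB s hs).trans (le_max_of_le_right (le_max_right _ _))) hpow⟩

lemma phiStar_nonneg_s10 (hφ0 : ∀ s, 0 ≤ φ s) (s : ℝ) : 0 ≤ phiStar φ s := by
  unfold phiStar
  split_ifs
  exacts [le_rfl, hφ0 s]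

lemma exists_abs_deriv_rpow_add_two_le_phiStar (hlam : 0 ≤ lam) (hφ : ContDiff ℝ 2 φ)
    (hφ0 : ∀ s, 0 ≤ φ s) (hflat : EqOn (deriv φ) 0 (Ioo 0 (1 / 2))) :
    ∃ K > 0, ∀ s ∈ Ioo (0 : ℝ) 1,
      |deriv (fun s => φ s ^ (lam + 2)) s| ≤ K * phiStar φ s ^ lam ∧
      |iteratedDeriv 2 (fun s => φ s ^ (lam + 2)) s| ≤ K * phiStar φ s ^ lam := by
  obtain ⟨K, hK, hbound⟩ := exists_abs_deriv_rpow_add_two_le hlam hφ hφ0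
    (isCompact_Icc (a := 0) (b := 1))
  refine ⟨K, hK, fun s hs => ?_⟩
  rcases lt_or_ge s (1 / 2) with hlt | hge
  · have hs' : s ∈ Ioo (0 : ℝ) (1 / 2) := ⟨hs.1, hlt⟩
    have hφ2 : iteratedDeriv 2 φ s = 0 := by
      rw [iteratedDeriv_succ, iteratedDeriv_one,
        (hflat.eventuallyEq_of_mem (isOpen_Ioo.mem_nhds hs')).deriv_eq]
      exact deriv_const s 0
    have hnonneg : 0 ≤ K * phiStar φ s ^ lam :=
      mul_nonneg hK.le (Real.rpow_nonneg (phiStar_nonneg_s10 hφ0 s) lam)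
    simpa [deriv_rpow_add_two hlam (hφ.differentiable two_ne_zero s) (hφ0 s),
      iteratedDeriv_two_rpow_add_two hlam hφ.contDiffAt (hφ0 s), hflat hs', hφ2] using hnonneg
  · rw [phiStar, if_neg hge.not_gt]
    exact hbound s (Ioo_subset_Icc_self hs)

lemma phiRStar_rpow_div (hlam : 0 ≤ lam) (hφ0 : ∀ s, 0 ≤ φ s) {d : ℕ} (R t : ℝ)
    (x : EuclideanSpace ℝ (Fin d)) :
    phiRStar φ lam R t x ^ (lam / (lam + 2)) = phiStar φ (parabolicGauge R t ‖x‖) ^ lam := by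
  rw [phiRStar, ← Real.rpow_mul (phiStar_nonneg_s10 hφ0 _), mul_div_cancel₀ _ (by positivity),
    parabolicGauge]

lemma CutoffHyp.deriv_eqOn_zero (hφ : CutoffHyp φ) : EqOn (deriv φ) 0 (Ioo 0 (1 / 2)) := by
  obtain ⟨-, -, hone, -⟩ := hφ
  intro s hs
  have hconst : φ =ᶠ[𝓝 s] fun _ => 1 := by
    filter_upwards [isOpen_Ioo.mem_nhds hs] with y hy using hone y (Ioo_subset_Icc_self hy)
  rw [hconst.deriv_eq, deriv_const, Pi.zero_apply]

end CutoffPower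

theorem phiR_laplacian_est_general (d : ℕ) {lam : ℝ} (hlam : 0 ≤ lam) {φ : ℝ → ℝ}
    (hφ : ContDiff ℝ 2 φ) (hφ0 : ∀ s, 0 ≤ φ s) (hflat : EqOn (deriv φ) 0 (Ioo 0 (1 / 2))) :
    ∃ C > (0 : ℝ), ∀ R > (0 : ℝ), ∀ (t : ℝ) (x : EuclideanSpace ℝ (Fin d)),
      1 < ‖x‖ → t ^ 2 + (‖x‖ - 1) ^ 4 < R ^ 4 →
      |lap (fun y => phiR φ lam R t y) x|
        ≤ C * R ^ (-2 : ℝ) * phiRStar φ lam R t x ^ (lam / (lam + 2)) := by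
  obtain ⟨K, hK, hbound⟩ := exists_abs_deriv_rpow_add_two_le_phiStar hlam hφ hφ0 hflat
  refine ⟨K * (28 + 4 * |(d : ℝ) - 1|), by positivity, fun R hR t x hx hQ => ?_⟩
  have hρ : parabolicGauge R t ‖x‖ < 1 := (div_lt_one (by positivity)).mpr hQ
  have hxR : |‖x‖ - 1| ≤ R := abs_sub_one_le_of_parabolicGauge_le_one hR hρ.le
  have hpow : ContDiff ℝ 2 fun s => φ s ^ (lam + 2) :=
    hφ.rpow_const_of_le (m := 2) (by simpa using hlam)
  obtain ⟨hF1, hF2⟩ := hbound _ ⟨parabolicGauge_pos hR hx, hρ⟩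
  rw [lap_eq_laplacian, phiRStar_rpow_div hlam hφ0]
  refine (abs_laplacian_comp_parabolicGauge_norm_le hpow hR hx.le hxR hF1 hF2).trans_eq ?_
  rw [finrank_euclideanSpace_fin, Real.rpow_neg hR.le, Real.rpow_two]
  ring

theorem phiR_laplacian_est (d : ℕ) (hd : 1 ≤ d) (lam : ℝ) (hlam : 0 < lam)
    (φ : ℝ → ℝ) (hφ : CutoffHyp φ) :
    ∃ C > (0 : ℝ), ∀ R > (0 : ℝ), ∀ (t : ℝ) (x : EuclideanSpace ℝ (Fin d)),
      0 < t → 1 < ‖x‖ → t ^ 2 + (‖x‖ - 1) ^ 4 < R ^ 4 →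
      |lap (fun y => phiR φ lam R t y) x|
        ≤ C * R ^ (-2 : ℝ) * phiRStar φ lam R t x ^ (lam / (lam + 2)) := by
  obtain ⟨C, hC, hest⟩ := phiR_laplacian_est_general d hlam.le (contDiff_infty.mp hφ.1 2)
    (fun s => (hφ.2.1 s).1) hφ.deriv_eqOn_zero
  exact ⟨C, hC, fun R hR t x _ => hest R hR t x⟩
end
end
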